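/- Let p be a prime, k a commutative ring with p·1 = 0, and R = k[t_1, …, t_d] the polynomial ring in d variables (d ≥ 1). Let A ⊆ R be the k-subalgebra generated by t_1^p, …, t_d^p. Consider the k-algebra homomorphism ρ from the d-th Weyl algebra W_d(k) to End_A(R) (A-linear endomorphisms of R) determined by sending t_i to multiplication by t_i and ∂_i to the partial derivative ∂/∂t_i. Then ρ is surjective, and its kernel is the two-sided ideal of W_d(k) generated by ∂_1^p, …, ∂_d^p; consequently W_d(k)/⟨∂_1^p, …, ∂_d^p⟩ ≅ End_A(R). -/

import Mathlib

noncomputable section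

/-- The defining relations of the `d`-th Weyl algebra: `t_i t_j = t_j t_i`,
`∂_i ∂_j = ∂_j ∂_i` and `∂_i t_j = t_j ∂_i + δ_{ij}`. -/
inductive WeylRel (k : Type*) [CommRing k] (d : ℕ) :
    FreeAlgebra k (Fin d ⊕ Fin d) → FreeAlgebra k (Fin d ⊕ Fin d) → Prop
  | tt (i j : Fin d) :
      WeylRel k d (FreeAlgebra.ι k (Sum.inl i) * FreeAlgebra.ι k (Sum.inl j))
        (FreeAlgebra.ι k (Sum.inl j) * FreeAlgebra.ι k (Sum.inl i))
  | dd (i j : Fin d) :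
      WeylRel k d (FreeAlgebra.ι k (Sum.inr i) * FreeAlgebra.ι k (Sum.inr j))
        (FreeAlgebra.ι k (Sum.inr j) * FreeAlgebra.ι k (Sum.inr i))
  | dt (i j : Fin d) :
      WeylRel k d (FreeAlgebra.ι k (Sum.inr i) * FreeAlgebra.ι k (Sum.inl j))
        (FreeAlgebra.ι k (Sum.inl j) * FreeAlgebra.ι k (Sum.inr i) + if i = j then 1 else 0)

/-- The `d`-th Weyl algebra over `k`: the free algebra on `t_1,…,t_d,∂_1,…,∂_d` modulo the
two-sided ideal generated by the Weyl relations. -/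
abbrev WeylAlgebra (k : Type*) [CommRing k] (d : ℕ) := RingQuot (WeylRel k d)

namespace WeylAlgebra

variable (k : Type*) [CommRing k] (d : ℕ)

/-- The generator `t_i` of the Weyl algebra. -/
def t (i : Fin d) : WeylAlgebra k d :=
  RingQuot.mkAlgHom k (WeylRel k d) (FreeAlgebra.ι k (Sum.inl i))

/-- The generator `∂_i` of the Weyl algebra. -/
def del (i : Fin d) : WeylAlgebra k d :=
  RingQuot.mkAlgHom k (WeylRel k d) (FreeAlgebra.ι k (Sum.inr i))

/-- The monomial `t^I = t_1^{i_1} ⋯ t_d^{i_d}` in the Weyl algebra. -/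
def monomialT (I : Fin d → ℕ) : WeylAlgebra k d :=
  ((List.finRange d).map fun i => t k d i ^ I i).prod

/-- The monomial `∂^J = ∂_1^{j_1} ⋯ ∂_d^{j_d}` in the Weyl algebra. -/
def monomialD (J : Fin d → ℕ) : WeylAlgebra k d :=
  ((List.finRange d).map fun i => del k d i ^ J i).prod

end WeylAlgebra

namespace WeylAux

open WeylAlgebra MvPolynomial

variable {k : Type*} [CommRing k] {d : ℕ}

theorem exists_lift {W : Type*} [Ring W] [Algebra k W] (x : Fin d → W)
    (hx : ∀ i j, x i * x j = x j * x i) :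
    ∃ T : MvPolynomial (Fin d) k →ₐ[k] W, ∀ i, T (X i) = x i := by
  letI : CommRing (Algebra.adjoin k (Set.range x)) := Algebra.adjoinCommRingOfComm k (by
    rintro _ ⟨i, rfl⟩ _ ⟨j, rfl⟩
    exact hx i j)
  refine ⟨(Algebra.adjoin k (Set.range x)).val.comp
    (aeval fun i => ⟨x i, Algebra.subset_adjoin ⟨i, rfl⟩⟩), fun i => ?_⟩
  rw [AlgHom.comp_apply, aeval_X]
  rfl

theorem t_comm (i j : Fin d) : t k d i * t k d j = t k d j * t k d i := by
  simpa [t] using RingQuot.mkAlgHom_rel k (WeylRel.tt (k := k) i j)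

theorem del_comm (i j : Fin d) : del k d i * del k d j = del k d j * del k d i := by
  simpa [del] using RingQuot.mkAlgHom_rel k (WeylRel.dd (k := k) i j)

theorem del_t (i j : Fin d) :
    del k d i * t k d j = t k d j * del k d i + if i = j then 1 else 0 := by
  have := RingQuot.mkAlgHom_rel k (WeylRel.dt (k := k) i j)
  rw [map_mul, map_add, map_mul, apply_ite (RingQuot.mkAlgHom k (WeylRel k d)), map_one,
    map_zero] at this
  exact this

theorem weyl_induction {motive : WeylAlgebra k d → Prop}
    (hs : ∀ r, motive (algebraMap k _ r)) (ht : ∀ i, motive (t k d i))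
    (hd : ∀ i, motive (del k d i))
    (mul : ∀ a b, motive a → motive b → motive (a * b))
    (add : ∀ a b, motive a → motive b → motive (a + b)) (w : WeylAlgebra k d) : motive w := by
  obtain ⟨x, rfl⟩ := RingQuot.mkAlgHom_surjective k (WeylRel k d) w
  induction x with
  | grade0 r => simpa using hs r
  | grade1 x =>
    rcases x with i | i
    · exact ht i
    · exact hd i
  | mul a b ha hb => simpa using mul _ _ ha hb
  | add a b ha hb => simpa using add _ _ ha hb

theorem del_T (T : MvPolynomial (Fin d) k →ₐ[k] WeylAlgebra k d) (hT : ∀ i, T (X i) = t k d i)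
    (i : Fin d) (c : MvPolynomial (Fin d) k) :
    del k d i * T c = T c * del k d i + T (pderiv i c) := by
  induction c using MvPolynomial.induction_on with
  | C a =>
    rw [pderiv_C, map_zero, add_zero, ← algebraMap_eq, AlgHom.commutes]
    exact (Algebra.commutes a _).symm
  | add f g hf hg => simp only [map_add, mul_add, add_mul, hf, hg]; abel
  | mul_X f j hf =>
    rw [map_mul, hT, ← mul_assoc, hf, add_mul, mul_assoc, del_t, Derivation.leibniz, map_add,
      pderiv_X, smul_eq_mul, smul_eq_mul, map_mul, mul_comm (X j), map_mul, hT]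
    by_cases h : i = j
    · subst h; simp [mul_add, mul_assoc]; abel
    · simp [h, mul_assoc, Pi.single_apply, Ne.symm h]

/-- exponent attached to a point of the box -/
def ex {p : ℕ} (J : Lex (Fin d → Fin p)) : Fin d →₀ ℕ :=
  Finsupp.equivFunOnFinite.symm fun i => (ofLex J i : ℕ)

theorem ex_apply {p : ℕ} (J : Lex (Fin d → Fin p)) (i : Fin d) : ex J i = (ofLex J i : ℕ) := rfl

section rho

variable (ρ : WeylAlgebra k d →ₐ[k] Module.End k (MvPolynomial (Fin d) k))

theorem rho_T (T : MvPolynomial (Fin d) k →ₐ[k] WeylAlgebra k d) (hT : ∀ i, T (X i) = t k d i)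
    (hρt : ∀ (i : Fin d) (f : MvPolynomial (Fin d) k), ρ (t k d i) f = X i * f)
    (c f : MvPolynomial (Fin d) k) : ρ (T c) f = c * f := by
  have : ρ.comp T = Algebra.lmul k (MvPolynomial (Fin d) k) := by
    apply MvPolynomial.algHom_ext
    intro i
    refine LinearMap.ext fun f => ?_
    simp [hT, hρt]
  exact congrArg (fun φ => φ c f) this

theorem rho_D (D : MvPolynomial (Fin d) k →ₐ[k] WeylAlgebra k d) (hD : ∀ i, D (X i) = del k d i)
    (hρd : ∀ (i : Fin d) (f : MvPolynomial (Fin d) k), ρ (del k d i) f = pderiv i f)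
    (I J : Fin d →₀ ℕ) (a : k) : ρ (D (monomial I 1)) (monomial J a) =
      monomial (J - I) (a * ∏ i, ((J i).descFactorial (I i) : k)) := by
  induction I using Finsupp.induction_linear generalizing J a with
  | zero => simp
  | add I₁ I₂ h₁ h₂ =>
    have : (monomial (I₁ + I₂) (1 : k)) = monomial I₂ 1 * monomial I₁ 1 := by
      rw [monomial_mul, one_mul, add_comm]
    rw [this, map_mul, map_mul, Module.End.mul_apply, h₁, h₂, tsub_tsub, mul_assoc,
      ← Finset.prod_mul_distrib]
    congr 2
    refine Finset.prod_congr rfl fun i _ => ?_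
    rw [← Nat.cast_mul, mul_comm, Finsupp.tsub_apply, Finsupp.add_apply]
    have := Nat.descFactorial_mul_descFactorial (n := J i) (Nat.le_add_right (I₁ i) (I₂ i))
    rw [Nat.add_sub_cancel_left] at this
    rw [this]
  | single i n =>
    induction n with
    | zero => simp
    | succ n ih =>
      have : (monomial (Finsupp.single i (n + 1)) (1 : k))
          = X i * monomial (Finsupp.single i n) 1 := by
        rw [X, monomial_mul, one_mul, ← Finsupp.single_add, add_comm]
      rw [this, map_mul, map_mul, Module.End.mul_apply, ih, hD, hρd, pderiv_monomial, tsub_tsub,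
        ← Finsupp.single_add]
      congr 1
      rw [mul_assoc]
      congr 1
      rw [Finset.prod_eq_single i, Finset.prod_eq_single i]
      · simp [Nat.descFactorial_succ, mul_comm]
      all_goals simp +contextual [Finsupp.single_apply, eq_comm]

theorem unit_of_lt {p : ℕ} (hp : p.Prime) (hchar : (p : k) = 0) {n : ℕ} (h0 : n < p) :
    IsUnit ((n.factorial : ℕ) : k) := by
  have h := Nat.isCoprime_iff_coprime.2 (hp.coprime_factorial_of_lt h0)
  have h' := h.map (Int.castRingHom k)
  simpa [hchar, isCoprime_zero_left] using h'

theorem linear (p : ℕ) (hchar : (p : k) = 0)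
    (hρt : ∀ (i : Fin d) (f : MvPolynomial (Fin d) k), ρ (t k d i) f = X i * f)
    (hρd : ∀ (i : Fin d) (f : MvPolynomial (Fin d) k), ρ (del k d i) f = pderiv i f)
    (w : WeylAlgebra k d) (a f : MvPolynomial (Fin d) k)
    (ha : a ∈ Algebra.adjoin k (Set.range fun i : Fin d => (X i : MvPolynomial (Fin d) k) ^ p)) :
    ρ w (a * f) = a * ρ w f := by
  induction w using weyl_induction generalizing f with
  | hs r => simp [Module.algebraMap_end_apply]
  | ht i => rw [hρt, hρt]; ring
  | mul u v hu hv => rw [map_mul ρ, Module.End.mul_apply, hv, hu, Module.End.mul_apply]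
  | add u v hu hv => simp [hu, hv, mul_add]
  | hd i =>
    induction ha using Algebra.adjoin_induction generalizing f with
    | mem x hx =>
      obtain ⟨j, rfl⟩ := hx
      have : (p : MvPolynomial (Fin d) k) = 0 := by rw [← map_natCast C, hchar, map_zero]
      simp [hρd, Derivation.leibniz, Derivation.leibniz_pow, this]
    | algebraMap r => rw [← Algebra.smul_def, ← Algebra.smul_def, map_smul]
    | add x y _ _ hx hy => simp only [add_mul, map_add, hx, hy]
    | mul x y _ _ hx hy => rw [mul_assoc, hx, hy, mul_assoc]

theorem normal_form (p : ℕ)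
    (T : MvPolynomial (Fin d) k →ₐ[k] WeylAlgebra k d) (hT : ∀ i, T (X i) = t k d i)
    (D : MvPolynomial (Fin d) k →ₐ[k] WeylAlgebra k d) (hD : ∀ i, D (X i) = del k d i)
    (w : WeylAlgebra k d) :
    ∃ c : Lex (Fin d → Fin p) → MvPolynomial (Fin d) k,
      w - ∑ J, T (c J) * D (monomial (ex J) 1) ∈
        TwoSidedIdeal.span (Set.range fun i : Fin d => del k d i ^ p) := by
  set I := TwoSidedIdeal.span (Set.range fun i : Fin d => del k d i ^ p) with hI
  let P : WeylAlgebra k d → Prop := fun w => ∃ c : Lex (Fin d → Fin p) → MvPolynomial (Fin d) k,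
      w - ∑ J, T (c J) * D (monomial (ex J) 1) ∈ I
  have Padd : ∀ u v, P u → P v → P (u + v) := by
    rintro u v ⟨c, hc⟩ ⟨c', hc'⟩
    refine ⟨c + c', ?_⟩
    have := I.add_mem hc hc'
    convert this using 1
    simp only [Pi.add_apply, map_add, add_mul, Finset.sum_add_distrib]
    abel
  have PI : ∀ u ∈ I, P u := fun u hu => ⟨0, by simpa using hu⟩
  have Psum : ∀ (f : Lex (Fin d → Fin p) → WeylAlgebra k d), (∀ J, P (f J)) → P (∑ J, f J) := by
    intro f hf
    refine Finset.sum_induction f P Padd (PI 0 I.zero_mem) fun J _ => hf J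
  have PT : ∀ f u, P u → P (T f * u) := by
    rintro f u ⟨c, hc⟩
    refine ⟨fun J => f * c J, ?_⟩
    convert I.mul_mem_left (T f) _ hc using 1
    simp only [map_mul, mul_sub, Finset.mul_sum, mul_assoc]
  have PD : ∀ s, P (D (monomial s 1)) := by
    intro s
    by_cases h : ∃ i, p ≤ s i
    · obtain ⟨i, hi⟩ := h
      apply PI
      have : (monomial s (1 : k)) = monomial (s - Finsupp.single i p) 1 * X i ^ p := by
        rw [X_pow_eq_monomial, monomial_mul, one_mul, tsub_add_cancel_of_le]
        simpa using hi
      rw [this, map_mul, map_pow, hD]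
      exact I.mul_mem_left _ _ (TwoSidedIdeal.subset_span ⟨i, rfl⟩)
    · push Not at h
      classical
      refine ⟨Pi.single (toLex fun i => ⟨s i, h i⟩) 1, ?_⟩
      rw [Finset.sum_eq_single (toLex fun i => ⟨s i, h i⟩)]
      · have : ex (toLex fun i => (⟨s i, h i⟩ : Fin p)) = s := by ext i; rfl
        rw [this]
        simp [I.zero_mem]
      · intro J _ hJ
        simp [hJ]
      · simp
  have key : ∀ w u, P u → P (w * u) := by
    intro w
    induction w using weyl_induction with
    | hs r => intro u hu; simpa using PT (algebraMap k _ r) u hu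
    | ht i => intro u hu; rw [← hT]; exact PT _ _ hu
    | mul a b ha hb => intro u hu; rw [mul_assoc]; exact ha _ (hb _ hu)
    | add a b ha hb => intro u hu; rw [add_mul]; exact Padd _ _ (ha _ hu) (hb _ hu)
    | hd i =>
      rintro u ⟨c, hc⟩
      have h1 := PI _ (I.mul_mem_left (del k d i) _ hc)
      rw [mul_sub] at h1
      have h2 : P (del k d i * ∑ J, T (c J) * D (monomial (ex J) 1)) := by
        rw [Finset.mul_sum]
        apply Psum
        intro J
        rw [← mul_assoc, del_T T hT, add_mul]
        refine Padd _ _ ?_ (PT _ _ (PD _))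
        rw [mul_assoc, ← hD, ← map_mul, X, monomial_mul, one_mul]
        exact PT _ _ (PD _)
      simpa using Padd _ _ h1 h2
  have h1 : P 1 := by simpa using PD 0
  simpa using key w 1 h1

/-- The matrix of values of the differential monomials on the monomials of the box. -/
def mat (p : ℕ) (D : MvPolynomial (Fin d) k →ₐ[k] WeylAlgebra k d) :
    Matrix (Lex (Fin d → Fin p)) (Lex (Fin d → Fin p)) (MvPolynomial (Fin d) k) :=
  fun J I => ρ (D (monomial (ex I) 1)) (monomial (ex J) 1)

theorem isUnit_mat (p : ℕ) (hp : p.Prime) (hchar : (p : k) = 0)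
    (D : MvPolynomial (Fin d) k →ₐ[k] WeylAlgebra k d) (hD : ∀ i, D (X i) = del k d i)
    (hρd : ∀ (i : Fin d) (f : MvPolynomial (Fin d) k), ρ (del k d i) f = pderiv i f) :
    IsUnit (mat ρ p D) := by
  rw [Matrix.isUnit_iff_isUnit_det, Matrix.det_of_isLowerTriangular]
  · rw [IsUnit.prod_iff]
    intro J _
    simp only [mat, rho_D ρ D hD hρd, tsub_self, one_mul, Nat.descFactorial_self]
    refine IsUnit.map C ?_
    rw [IsUnit.prod_iff]
    intro i _
    exact unit_of_lt hp hchar (ofLex J i).2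
  · intro J I hJI
    have hlt : J < I := hJI
    have : ¬ (ofLex I ≤ ofLex J) := fun h => not_lt_of_ge (Pi.toLex_monotone h) hlt
    rw [Pi.le_def] at this
    push Not at this
    obtain ⟨i, hi⟩ := this
    simp only [mat, rho_D ρ D hD hρd]
    rw [Finset.prod_eq_zero (Finset.mem_univ i)]
    · simp
    · rw [Nat.descFactorial_of_lt]
      · simp
      · exact hi

theorem ext_box (p : ℕ) (hp : p.Prime) (g h : Module.End k (MvPolynomial (Fin d) k))
    (hg : ∀ a f : MvPolynomial (Fin d) k,
        a ∈ Algebra.adjoin k (Set.range fun i : Fin d => (X i : MvPolynomial (Fin d) k) ^ p) →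
        g (a * f) = a * g f)
    (hh : ∀ a f : MvPolynomial (Fin d) k,
        a ∈ Algebra.adjoin k (Set.range fun i : Fin d => (X i : MvPolynomial (Fin d) k) ^ p) →
        h (a * f) = a * h f)
    (hgh : ∀ J : Lex (Fin d → Fin p), g (monomial (ex J) 1) = h (monomial (ex J) 1)) : g = h := by
  have main : ∀ s : Fin d →₀ ℕ, g (monomial s 1) = h (monomial s 1) := by
    intro s
    let J : Lex (Fin d → Fin p) := toLex fun i => ⟨s i % p, Nat.mod_lt _ hp.pos⟩
    have e : (monomial s (1 : k)) = (∏ i, (X i ^ p) ^ (s i / p)) * monomial (ex J) 1 := by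
      rw [monomial_eq, monomial_eq, Finsupp.prod_fintype _ _ (by simp),
        Finsupp.prod_fintype _ _ (by simp), map_one, one_mul, one_mul, ← Finset.prod_mul_distrib]
      refine Finset.prod_congr rfl fun i _ => ?_
      rw [← pow_mul, ← pow_add]
      congr 1
      exact (Nat.div_add_mod _ _).symm
    have hmem : (∏ i, ((X i : MvPolynomial (Fin d) k) ^ p) ^ (s i / p)) ∈
        Algebra.adjoin k (Set.range fun i : Fin d => (X i : MvPolynomial (Fin d) k) ^ p) :=
      Subalgebra.prod_mem _ fun i _ =>
        Subalgebra.pow_mem _ (Algebra.subset_adjoin (Set.mem_range_self i)) _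
    rw [e, hg _ _ hmem, hh _ _ hmem, hgh]
  refine LinearMap.ext fun f => ?_
  induction f using MvPolynomial.induction_on' with
  | monomial u a =>
    have : (monomial u a : MvPolynomial (Fin d) k) = a • monomial u 1 := by
      rw [smul_monomial, smul_eq_mul, mul_one]
    rw [this, map_smul, map_smul, main]
  | add f f' hf hf' => rw [map_add, map_add, hf, hf']

theorem rho_sum (p : ℕ)
    (T : MvPolynomial (Fin d) k →ₐ[k] WeylAlgebra k d) (hT : ∀ i, T (X i) = t k d i)
    (D : MvPolynomial (Fin d) k →ₐ[k] WeylAlgebra k d)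
    (hρt : ∀ (i : Fin d) (f : MvPolynomial (Fin d) k), ρ (t k d i) f = X i * f)
    (c : Lex (Fin d → Fin p) → MvPolynomial (Fin d) k) (J : Lex (Fin d → Fin p)) :
    ρ (∑ I, T (c I) * D (monomial (ex I) 1)) (monomial (ex J) 1) = (mat ρ p D).mulVec c J := by
  simp only [map_sum, map_mul, LinearMap.sum_apply, Module.End.mul_apply, rho_T ρ T hT hρt,
    Matrix.mulVec, dotProduct, mat, mul_comm]

theorem rho_span (p : ℕ) (hp : p.Prime) (hchar : (p : k) = 0)
    (D : MvPolynomial (Fin d) k →ₐ[k] WeylAlgebra k d) (hD : ∀ i, D (X i) = del k d i)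
    (hρd : ∀ (i : Fin d) (f : MvPolynomial (Fin d) k), ρ (del k d i) f = pderiv i f)
    (w : WeylAlgebra k d)
    (hw : w ∈ TwoSidedIdeal.span (Set.range fun i : Fin d => del k d i ^ p)) : ρ w = 0 := by
  rw [TwoSidedIdeal.mem_span_iff] at hw
  rw [← TwoSidedIdeal.mem_ker]
  apply hw
  rintro _ ⟨i, rfl⟩
  rw [SetLike.mem_coe, TwoSidedIdeal.mem_ker]
  change ρ (del k d i ^ p) = 0
  rw [← hD, ← map_pow, X_pow_eq_monomial]
  refine LinearMap.ext fun f => ?_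
  induction f using MvPolynomial.induction_on' with
  | add f f' hf hf' => rw [map_add, hf, hf']; simp
  | monomial u a =>
    rw [rho_D ρ D hD hρd, Finset.prod_eq_zero (Finset.mem_univ i)]
    · simp
    · have h1 : p ∣ (u i).descFactorial p :=
        (Nat.dvd_factorial hp.pos le_rfl).trans (Nat.factorial_dvd_descFactorial _ _)
      obtain ⟨m, hm⟩ := h1
      simp [hm, hchar]

end rho

end WeylAux

open WeylAlgebra MvPolynomial in
/-- In characteristic `p`, the representation `ρ` of the Weyl algebra `W_d(k)` on
`R = k[t_1,…,t_d]`, sending `t_i` to multiplication by `t_i` and `∂_i` to `∂/∂t_i`, takes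
values in the `A`-linear endomorphisms of `R` for `A = k[t_1^p,…,t_d^p]`, is surjective
onto them, and has kernel the two-sided ideal generated by `∂_1^p, …, ∂_d^p`; consequently
`W_d(k)/⟨∂_1^p,…,∂_d^p⟩ ≅ End_A(R)`. -/
theorem weylAlgebra_acts_on_polynomials (p : ℕ) (hp : p.Prime)
    (k : Type*) [CommRing k] (hchar : (p : k) = 0) (d : ℕ) (hd : 1 ≤ d)
    (ρ : WeylAlgebra k d →ₐ[k] Module.End k (MvPolynomial (Fin d) k))
    (hρt : ∀ (i : Fin d) (f : MvPolynomial (Fin d) k), ρ (t k d i) f = X i * f)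
    (hρd : ∀ (i : Fin d) (f : MvPolynomial (Fin d) k), ρ (del k d i) f = pderiv i f) :
    (∀ (w : WeylAlgebra k d) (a f : MvPolynomial (Fin d) k),
      a ∈ Algebra.adjoin k (Set.range fun i : Fin d => (X i : MvPolynomial (Fin d) k) ^ p) →
      ρ w (a * f) = a * ρ w f) ∧
    (∀ g : Module.End k (MvPolynomial (Fin d) k),
      (∀ a f : MvPolynomial (Fin d) k,
        a ∈ Algebra.adjoin k (Set.range fun i : Fin d => (X i : MvPolynomial (Fin d) k) ^ p) →
        g (a * f) = a * g f) →
      ∃ w : WeylAlgebra k d, ρ w = g) ∧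
    (∀ w : WeylAlgebra k d,
      ρ w = 0 ↔ w ∈ TwoSidedIdeal.span (Set.range fun i : Fin d => del k d i ^ p)) := by
  obtain ⟨T, hT⟩ := WeylAux.exists_lift (k := k) (t k d) WeylAux.t_comm
  obtain ⟨D, hD⟩ := WeylAux.exists_lift (k := k) (del k d) WeylAux.del_comm
  have hlin := WeylAux.linear ρ p hchar hρt hρd
  have hU := WeylAux.isUnit_mat ρ p hp hchar D hD hρd
  refine ⟨hlin, fun g hg => ?_, fun w => ⟨fun hw => ?_, WeylAux.rho_span ρ p hp hchar D hD hρd w⟩⟩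
  · obtain ⟨c, hc⟩ := Matrix.mulVec_surjective_iff_isUnit.2 hU
      (fun J => g (monomial (WeylAux.ex J) 1))
    refine ⟨∑ J, T (c J) * D (monomial (WeylAux.ex J) 1),
      WeylAux.ext_box p hp _ _ (hlin _) hg fun J => ?_⟩
    rw [WeylAux.rho_sum ρ p T hT D hρt, hc]
  · obtain ⟨c, hc⟩ := WeylAux.normal_form p T hT D hD w
    have h0 := WeylAux.rho_span ρ p hp hchar D hD hρd _ hc
    rw [map_sub, hw, zero_sub, neg_eq_zero] at h0
    have h1 : (WeylAux.mat ρ p D).mulVec c = 0 := by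
      ext1 J
      rw [← WeylAux.rho_sum ρ p T hT D hρt, h0]
      rfl
    have h2 : c = 0 := by
      apply Matrix.mulVec_injective_of_isUnit hU
      rw [h1, Matrix.mulVec_zero]
    simpa [h2] using hc
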